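/- Let H = (1/√2)·[[1, 1], [1, −1]] be the 2×2 Hadamard matrix. Then the set of monomial unitary 2×2 complex matrices U such that H U H⁻¹ is monomial equals the set {λ·P : λ ∈ ℂ, |λ| = 1, P ∈ {[[1,0],[0,1]], [[1,0],[0,−1]], [[0,1],[1,0]], [[0,−1],[1,0]]}}, i.e., the single-qubit Pauli group up to phase. -/

import Mathlib

open scoped Matrix

/-- A square matrix is monomial if every row and every column contains exactly one
nonzero entry. -/
def Matrix.IsMonomial {n : Type*} [Fintype n] (M : Matrix n n ℂ) : Prop :=
  (∀ i, ∃! j, M i j ≠ 0) ∧ (∀ j, ∃! i, M i j ≠ 0)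

/-!
Conjugation by the Hadamard matrix sends `Z` to `X` and `X` to the monomial matrix `Z`. A monomial
`2 × 2` matrix is `M` or `X * M` with `M = x • 1 + y • Z` diagonal, and its conjugate is
`x • 1 + y • X`, up to a monomial factor on the left, which does not affect monomiality. As
`x • 1 + y • X` has both `x` and `y` in each row, it is monomial iff exactly one of them is nonzero,
and then `M` is a multiple of `1` or `Z`.
-/

section Monomial

variable {n : Type*} [Fintype n]

theorem isMonomial_iff_exists_perm {M : Matrix n n ℂ} :
    M.IsMonomial ↔ ∃ σ : Equiv.Perm n, ∀ i j, M i j ≠ 0 ↔ σ i = j := by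
  constructor
  · rintro ⟨hrow, hcol⟩
    obtain ⟨f, hf⟩ := forall_existsUnique_iff.1 hrow
    have hf_bij : f.Bijective :=
      f.bijective_iff_existsUnique.2 fun j ↦ by simpa only [hf] using hcol j
    exact ⟨.ofBijective f hf_bij, fun _ _ ↦ hf⟩
  · rintro ⟨σ, hσ⟩
    simp only [Matrix.IsMonomial, hσ]
    exact ⟨fun i ↦ existsUnique_eq', σ.bijective.existsUnique⟩

theorem isMonomial_one [DecidableEq n] : (1 : Matrix n n ℂ).IsMonomial :=
  isMonomial_iff_exists_perm.2 ⟨1, fun i j ↦ by simp [Matrix.one_apply]⟩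

theorem isMonomial_smul_iff {c : ℂ} (hc : c ≠ 0) {M : Matrix n n ℂ} :
    (c • M).IsMonomial ↔ M.IsMonomial := by
  simp [Matrix.IsMonomial, hc]

theorem isMonomial_mul_iff {D M : Matrix n n ℂ} (hD : D.IsMonomial) :
    (D * M).IsMonomial ↔ M.IsMonomial := by
  obtain ⟨σ, hσ⟩ := isMonomial_iff_exists_perm.1 hD
  have entry_eq (i k : n) : (D * M) i k = D i (σ i) * M (σ i) k := by
    rw [Matrix.mul_apply]
    refine Fintype.sum_eq_single _ fun j hj ↦ ?_
    rw [not_ne_iff.1 (mt (hσ i j).1 hj.symm), zero_mul]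
  have entry_ne_zero (i k : n) : (D * M) i k ≠ 0 ↔ M (σ i) k ≠ 0 := by
    rw [entry_eq, mul_ne_zero_iff_left ((hσ i _).2 rfl)]
  simp only [Matrix.IsMonomial, entry_ne_zero]
  exact and_congr (σ.surjective.forall (p := fun i ↦ ∃! k, M i k ≠ 0)).symm
    (forall_congr' fun k ↦ (σ.bijective.existsUnique_iff (p := (M · k ≠ 0))).symm)

theorem isMonomial_fin_two_iff {M : Matrix (Fin 2) (Fin 2) ℂ} :
    M.IsMonomial ↔ (M 0 0 ≠ 0 ∧ M 1 1 ≠ 0 ∧ M 0 1 = 0 ∧ M 1 0 = 0) ∨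
      (M 0 0 = 0 ∧ M 1 1 = 0 ∧ M 0 1 ≠ 0 ∧ M 1 0 ≠ 0) := by
  simp only [Matrix.IsMonomial, ExistsUnique, Fin.forall_fin_two, Fin.exists_fin_two]
  grind

end Monomial

theorem smul_mem_unitaryGroup_iff {𝕜 n : Type*} [RCLike 𝕜] [Fintype n] [DecidableEq n] [Nonempty n]
    {A : Matrix n n 𝕜} (hA : A ∈ Matrix.unitaryGroup n 𝕜) {c : 𝕜} :
    c • A ∈ Matrix.unitaryGroup n 𝕜 ↔ ‖c‖ = 1 := by
  have mul_star_smul : c • A * star (c • A) = ((‖c‖ ^ 2 : ℝ) : 𝕜) • (1 : Matrix n n 𝕜) := by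
    rw [star_smul, smul_mul_smul_comm, Matrix.mem_unitaryGroup_iff.1 hA, RCLike.star_def,
      RCLike.mul_conj, RCLike.ofReal_pow]
  rw [Matrix.mem_unitaryGroup_iff, mul_star_smul, ← Algebra.algebraMap_eq_smul_one,
    FaithfulSMul.algebraMap_eq_one_iff, ← RCLike.ofReal_one,
    RCLike.ofReal_inj, pow_eq_one_iff_of_nonneg (norm_nonneg c) two_ne_zero]

theorem conj_eq_of_semiconjBy {n R : Type*} [Fintype n] [DecidableEq n] [CommRing R]
    {H A B : Matrix n n R} (hH : IsUnit H.det) (h : SemiconjBy H A B) : H * A * H⁻¹ = B := by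
  rw [h.eq, Matrix.mul_nonsing_inv_cancel_right _ _ hH]

/-- The Pauli matrix `X`. -/
def pauliX : Matrix (Fin 2) (Fin 2) ℂ := !![0, 1; 1, 0]

/-- The Pauli matrix `Z`. -/
def pauliZ : Matrix (Fin 2) (Fin 2) ℂ := !![1, 0; 0, -1]

/-- Representatives of the single-qubit Pauli group modulo phases; `X * Z` stands in for
`Y = i X Z`. -/
def pauliMatrices : Set (Matrix (Fin 2) (Fin 2) ℂ) := {1, pauliZ, pauliX, pauliX * pauliZ}

theorem pauliX_mul_self : pauliX * pauliX = 1 := by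
  simp [pauliX, Matrix.one_fin_two]

theorem isMonomial_pauliX : pauliX.IsMonomial := by
  simp [isMonomial_fin_two_iff, pauliX]

theorem isMonomial_pauliZ : pauliZ.IsMonomial := by
  simp [isMonomial_fin_two_iff, pauliZ]

theorem pauliX_mem_unitaryGroup : pauliX ∈ Matrix.unitaryGroup (Fin 2) ℂ := by
  rw [Matrix.mem_unitaryGroup_iff, ← Matrix.ext_iff]
  simp [pauliX, Fin.forall_fin_two, Matrix.mul_apply, Matrix.star_apply]

theorem pauliZ_mem_unitaryGroup : pauliZ ∈ Matrix.unitaryGroup (Fin 2) ℂ := by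
  rw [Matrix.mem_unitaryGroup_iff, ← Matrix.ext_iff]
  simp [pauliZ, Fin.forall_fin_two, Matrix.mul_apply, Matrix.star_apply]

theorem isMonomial_of_mem_pauliMatrices {P : Matrix (Fin 2) (Fin 2) ℂ} (hP : P ∈ pauliMatrices) :
    P.IsMonomial := by
  rcases hP with rfl | rfl | rfl | rfl
  exacts [isMonomial_one, isMonomial_pauliZ, isMonomial_pauliX,
    (isMonomial_mul_iff isMonomial_pauliX).2 isMonomial_pauliZ]

theorem mem_unitaryGroup_of_mem_pauliMatrices {P : Matrix (Fin 2) (Fin 2) ℂ}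
    (hP : P ∈ pauliMatrices) : P ∈ Matrix.unitaryGroup (Fin 2) ℂ := by
  rcases hP with rfl | rfl | rfl | rfl
  exacts [one_mem _, pauliZ_mem_unitaryGroup, pauliX_mem_unitaryGroup,
    mul_mem pauliX_mem_unitaryGroup pauliZ_mem_unitaryGroup]

theorem exists_eq_smul_one_add_smul_pauliZ {M : Matrix (Fin 2) (Fin 2) ℂ} (h₀₁ : M 0 1 = 0)
    (h₁₀ : M 1 0 = 0) : ∃ x y : ℂ, M = x • 1 + y • pauliZ := by
  refine ⟨(M 0 0 + M 1 1) / 2, (M 0 0 - M 1 1) / 2, Matrix.ext fun i j ↦ ?_⟩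
  fin_cases i <;> fin_cases j <;> simp [pauliZ, h₀₁, h₁₀] <;> ring

theorem exists_eq_or_eq_pauliX_mul_of_isMonomial {U : Matrix (Fin 2) (Fin 2) ℂ}
    (hU : U.IsMonomial) :
    ∃ x y : ℂ, U = x • 1 + y • pauliZ ∨ U = pauliX * (x • 1 + y • pauliZ) := by
  rcases isMonomial_fin_two_iff.1 hU with ⟨-, -, h₀₁, h₁₀⟩ | ⟨h₀₀, h₁₁, -, -⟩
  · obtain ⟨x, y, hU_eq⟩ := exists_eq_smul_one_add_smul_pauliZ h₀₁ h₁₀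
    exact ⟨x, y, .inl hU_eq⟩
  · obtain ⟨x, y, hXU_eq⟩ := exists_eq_smul_one_add_smul_pauliZ (M := pauliX * U)
      (by simp [pauliX, Matrix.mul_apply, h₁₁]) (by simp [pauliX, Matrix.mul_apply, h₀₀])
    refine ⟨x, y, .inr ?_⟩
    rw [← hXU_eq, ← mul_assoc, pauliX_mul_self, one_mul]

theorem isMonomial_smul_one_add_smul_pauliX_iff {x y : ℂ} :
    (x • 1 + y • pauliX).IsMonomial ↔ (x ≠ 0 ∧ y = 0) ∨ (x = 0 ∧ y ≠ 0) := by
  simp [isMonomial_fin_two_iff, pauliX]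

/-- The unitary Hadamard matrix, the change of basis between the eigenbases of `Z` and `X`. -/
noncomputable def hadamardGate : Matrix (Fin 2) (Fin 2) ℂ :=
  ((Real.sqrt 2 : ℂ))⁻¹ • !![1, 1; 1, -1]

theorem isUnit_det_hadamardGate : IsUnit hadamardGate.det := by
  rw [hadamardGate, Matrix.det_smul, Matrix.det_fin_two_of]
  norm_num

theorem semiconjBy_hadamardGate_pauliZ_pauliX : SemiconjBy hadamardGate pauliZ pauliX :=
  SemiconjBy.smul_left (by simp [SemiconjBy, pauliZ, pauliX]) _

theorem semiconjBy_hadamardGate_pauliX_pauliZ : SemiconjBy hadamardGate pauliX pauliZ :=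
  SemiconjBy.smul_left (by simp [SemiconjBy, pauliZ, pauliX]) _

section Intertwiner

variable {H D U : Matrix (Fin 2) (Fin 2) ℂ}

theorem exists_semiconjBy_isMonomial_of_mem_pauliMatrices (hZ : SemiconjBy H pauliZ pauliX)
    (hX : SemiconjBy H pauliX D) (hD : D.IsMonomial) {P : Matrix (Fin 2) (Fin 2) ℂ}
    (hP : P ∈ pauliMatrices) : ∃ Q : Matrix (Fin 2) (Fin 2) ℂ, SemiconjBy H P Q ∧ Q.IsMonomial := by
  rcases hP with rfl | rfl | rfl | rfl
  exacts [⟨1, .one_right H, isMonomial_one⟩, ⟨pauliX, hZ, isMonomial_pauliX⟩, ⟨D, hX, hD⟩,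
    ⟨D * pauliX, hX.mul_right hZ, (isMonomial_mul_iff hD).2 isMonomial_pauliX⟩]

theorem exists_eq_smul_pauli_of_isMonomial_conj (hH : IsUnit H.det)
    (hZ : SemiconjBy H pauliZ pauliX) (hX : SemiconjBy H pauliX D) (hD : D.IsMonomial)
    (hU : U.IsMonomial) (hHU : (H * U * H⁻¹).IsMonomial) :
    ∃ c : ℂ, ∃ P ∈ pauliMatrices, U = c • P := by
  obtain ⟨x, y, hU_eq⟩ := exists_eq_or_eq_pauliX_mul_of_isMonomial hU
  have hdiag : SemiconjBy H (x • 1 + y • pauliZ) (x • 1 + y • pauliX) :=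
    ((SemiconjBy.one_right H).smul_right x).add_right (hZ.smul_right y)
  have hxy : (x • 1 + y • pauliX).IsMonomial := by
    rcases hU_eq with rfl | rfl
    · rwa [conj_eq_of_semiconjBy hH hdiag] at hHU
    · rwa [conj_eq_of_semiconjBy hH (hX.mul_right hdiag), isMonomial_mul_iff hD] at hHU
  rcases isMonomial_smul_one_add_smul_pauliX_iff.1 hxy with ⟨-, rfl⟩ | ⟨rfl, -⟩
  · rw [zero_smul, add_zero, mul_smul_comm, mul_one] at hU_eq
    exact ⟨x, hU_eq.elim (⟨1, by simp [pauliMatrices], ·⟩) (⟨pauliX, by simp [pauliMatrices], ·⟩)⟩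
  · rw [zero_smul, zero_add, mul_smul_comm] at hU_eq
    exact ⟨y, hU_eq.elim (⟨pauliZ, by simp [pauliMatrices], ·⟩)
      (⟨pauliX * pauliZ, by simp [pauliMatrices], ·⟩)⟩

theorem isMonomial_conj_smul_pauli (hH : IsUnit H.det)
    (hZ : SemiconjBy H pauliZ pauliX) (hX : SemiconjBy H pauliX D) (hD : D.IsMonomial)
    {c : ℂ} (hc : c ≠ 0) {P : Matrix (Fin 2) (Fin 2) ℂ} (hP : P ∈ pauliMatrices) :
    (H * (c • P) * H⁻¹).IsMonomial := by
  obtain ⟨Q, hPQ, hQ⟩ := exists_semiconjBy_isMonomial_of_mem_pauliMatrices hZ hX hD hP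
  rw [conj_eq_of_semiconjBy hH (hPQ.smul_right c)]
  exact (isMonomial_smul_iff hc).2 hQ

/-- With `D = -Y` this covers `hadamardGate * !![1, 0; 0, Complex.I]`. -/
theorem ising_hadamard_intertwiners_are_pauli_general (hH : IsUnit H.det)
    (hZ : SemiconjBy H pauliZ pauliX) (hX : SemiconjBy H pauliX D) (hD : D.IsMonomial) :
    {U : Matrix (Fin 2) (Fin 2) ℂ |
        U ∈ Matrix.unitaryGroup (Fin 2) ℂ ∧ U.IsMonomial ∧ (H * U * H⁻¹).IsMonomial} =
      {U : Matrix (Fin 2) (Fin 2) ℂ | ∃ lam : ℂ, ‖lam‖ = 1 ∧ ∃ P ∈ pauliMatrices, U = lam • P} := by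
  ext U
  constructor
  · rintro ⟨hU_unitary, hU, hHU⟩
    obtain ⟨c, P, hP, rfl⟩ := exists_eq_smul_pauli_of_isMonomial_conj hH hZ hX hD hU hHU
    have hc := (smul_mem_unitaryGroup_iff (mem_unitaryGroup_of_mem_pauliMatrices hP)).1 hU_unitary
    exact ⟨c, hc, P, hP, rfl⟩
  · rintro ⟨c, hc, P, hP, rfl⟩
    have hc₀ : c ≠ 0 := norm_ne_zero_iff.1 (hc ▸ one_ne_zero)
    exact ⟨(smul_mem_unitaryGroup_iff (mem_unitaryGroup_of_mem_pauliMatrices hP)).2 hc,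
      (isMonomial_smul_iff hc₀).2 (isMonomial_of_mem_pauliMatrices hP),
      isMonomial_conj_smul_pauli hH hZ hX hD hc₀ hP⟩

end Intertwiner

/-- **Ising intertwiners of the Hadamard `F`-move are the Pauli group.**
With `H = (1/√2) [[1, 1], [1, −1]]`, the monomial unitary `2 × 2` matrices `U` such
that `H U H⁻¹` is monomial are exactly the unimodular multiples of the four matrices
`[[1,0],[0,1]]`, `[[1,0],[0,−1]]`, `[[0,1],[1,0]]`, `[[0,−1],[1,0]]`, i.e., the
single-qubit Pauli group up to phase. -/
theorem ising_hadamard_intertwiners_are_pauli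
    (H : Matrix (Fin 2) (Fin 2) ℂ)
    (hH : H = ((Real.sqrt 2 : ℂ))⁻¹ • !![1, 1; 1, -1]) :
    {U : Matrix (Fin 2) (Fin 2) ℂ |
        U ∈ Matrix.unitaryGroup (Fin 2) ℂ ∧ U.IsMonomial ∧ (H * U * H⁻¹).IsMonomial} =
      {U : Matrix (Fin 2) (Fin 2) ℂ | ∃ lam : ℂ, ‖lam‖ = 1 ∧
        (U = lam • !![1, 0; 0, 1] ∨ U = lam • !![1, 0; 0, -1] ∨
          U = lam • !![0, 1; 1, 0] ∨ U = lam • !![0, -1; 1, 0])} := by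
  obtain rfl : H = hadamardGate := hH
  rw [ising_hadamard_intertwiners_are_pauli_general isUnit_det_hadamardGate
    semiconjBy_hadamardGate_pauliZ_pauliX semiconjBy_hadamardGate_pauliX_pauliZ isMonomial_pauliZ]
  simp [pauliMatrices, pauliX, pauliZ, Matrix.one_fin_two]
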